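/- arXiv:math-ph/0306059 — 3 statements merged into one kernel-verified Lean document; each statement's English description precedes it below -/
import Mathlib

section
/- (First fundamental theorem for the orthogonal group, endomorphism form.) Let n ≥ 1 and d ≥ 1, and let V = ℂ^n. Every ℂ-linear endomorphism of V^{⊗d} commuting with u^{⊗d} for every u ∈ O(n) is a ℂ-linear combination of the operators J_τ, where τ runs over the partitions of {1, …, 2d} into pairs. -/
open scoped TensorProduct

/-- The operator `J_τ` on `(ℂ^n)^{⊗d}` associated to a partition `τ` of `{1, …, 2d}`
into pairs (encoded as a fixed-point-free involution). Under the identification of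
`End((ℂ^n)^{⊗d})` with `(ℂ^n)^{⊗2d}` given by the standard bilinear form
`⟨·,·⟩` (in which `v₁ ⊗ ⋯ ⊗ v_{2d}` sends `w₁ ⊗ ⋯ ⊗ w_d` to
`(∏ i, ⟨v_i, w_i⟩) · v_{d+1} ⊗ ⋯ ⊗ v_{2d}`), it corresponds to
`∑_{i : Fin 2d → Fin n} (∏_{{k,l} ∈ τ} ⟨e_{i k}, e_{i l}⟩) · e_{i 1} ⊗ ⋯ ⊗ e_{i 2d}`. -/
noncomputable def pairingMap (n d : ℕ) (τ : Equiv.Perm (Fin (2 * d))) :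
    (⨂[ℂ] _ : Fin d, (Fin n → ℂ)) →ₗ[ℂ] ⨂[ℂ] _ : Fin d, (Fin n → ℂ) :=
  ∑ i : Fin (2 * d) → Fin n,
    (∏ k ∈ Finset.univ.filter fun k : Fin (2 * d) => k < τ k,
        (if i k = i (τ k) then (1 : ℂ) else 0)) •
      LinearMap.smulRight
        (PiTensorProduct.lift
          ((MultilinearMap.mkPiAlgebra ℂ (Fin d) ℂ).compLinearMap fun j =>
            LinearMap.proj (i (⟨(j : ℕ), by have := j.isLt; omega⟩ : Fin (2 * d)))))
        (PiTensorProduct.tprod ℂ fun j : Fin d =>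
          Pi.single (i (⟨d + (j : ℕ), by have := j.isLt; omega⟩ : Fin (2 * d))) (1 : ℂ))

open MeasureTheory ProbabilityTheory

noncomputable def gmom (k : ℕ) : ℝ := ∫ x, x ^ k ∂(gaussianReal 0 1)

lemma gint (k : ℕ) : Integrable (fun x : ℝ => x ^ k) (gaussianReal 0 1) := by
  have h := (memLp_id_gaussianReal (μ := 0) (v := 1) (k : NNReal))
  have := h.integrable_norm_pow'
  simp only [id] at this
  refine this.mono' (by fun_prop) (by simp)

lemma gmom_zero : gmom 0 = 1 := by simp [gmom]

lemma gpdf_deriv (x : ℝ) : HasDerivAt (gaussianPDFReal 0 1) (-x * gaussianPDFReal 0 1 x) x := by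
  unfold gaussianPDFReal
  have h : HasDerivAt (fun x : ℝ => -(x - 0) ^ 2 / (2 * ((1 : NNReal) : ℝ))) (-x) x := by
    have := ((((hasDerivAt_id x).sub_const 0).pow 2).neg).div_const (2 * ((1 : NNReal) : ℝ))
    refine HasDerivAt.congr_deriv (f := fun x : ℝ => -(x - 0) ^ 2 / (2 * ((1 : NNReal) : ℝ))) this ?_
    simp
    ring
  refine ((h.exp).const_mul ((Real.sqrt (2 * Real.pi * ((1 : NNReal) : ℝ)))⁻¹)).congr_deriv ?_
  ring

lemma gint' (k : ℕ) : Integrable (fun x : ℝ => x ^ k * gaussianPDFReal 0 1 x) := by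
  have h := gint k
  rw [gaussianReal_of_var_ne_zero _ one_ne_zero] at h
  rw [integrable_withDensity_iff (measurable_gaussianPDF 0 1) (by simp [gaussianPDF])] at h
  simpa using h

lemma gmom_eq (k : ℕ) : gmom k = ∫ x : ℝ, x ^ k * gaussianPDFReal 0 1 x := by
  unfold gmom
  rw [integral_gaussianReal_eq_integral_smul one_ne_zero]
  congr 1; ext x; simp [mul_comm]

lemma gmom_succ (k : ℕ) : gmom (k + 1) = k * gmom (k - 1) := by
  have hd : ∀ x : ℝ, HasDerivAt (fun x : ℝ => x ^ k * gaussianPDFReal 0 1 x)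
      (k * (x ^ (k - 1) * gaussianPDFReal 0 1 x) - x ^ (k + 1) * gaussianPDFReal 0 1 x) x := by
    intro x
    refine HasDerivAt.congr_deriv (f := fun x : ℝ => x ^ k * gaussianPDFReal 0 1 x)
      ((hasDerivAt_pow k x).mul (gpdf_deriv x)) ?_
    ring
  have := integral_eq_zero_of_hasDerivAt_of_integrable hd
    (((gint' (k - 1)).const_mul _).sub (gint' (k + 1))) (gint' k)
  rw [integral_sub ((gint' (k - 1)).const_mul _) (gint' (k + 1)), integral_const_mul,
    ← gmom_eq, ← gmom_eq] at this
  linarith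

lemma gauss_prod {A K : Type*} [Fintype A] [DecidableEq A] (S : Finset K) (a : K → A) :
    Integrable (fun x : A → ℝ => ∏ k ∈ S, x (a k)) (Measure.pi fun _ => gaussianReal 0 1) ∧
    ∫ x : A → ℝ, ∏ k ∈ S, x (a k) ∂(Measure.pi fun _ => gaussianReal 0 1)
      = ∏ b, gmom (S.filter fun k => a k = b).card := by
  have h : (fun x : A → ℝ => ∏ k ∈ S, x (a k))
      = fun x => ∏ b, (x b) ^ (S.filter fun k => a k = b).card := by
    ext x
    rw [← Finset.prod_fiberwise S a]
    refine Finset.prod_congr rfl fun b _ => ?_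
    rw [← Finset.prod_const]
    refine Finset.prod_congr rfl fun k hk => ?_
    rw [(Finset.mem_filter.1 hk).2]
  rw [h]
  constructor
  · exact Integrable.fintype_prod (f := fun b (y : ℝ) => y ^ (S.filter fun k => a k = b).card)
      fun b => gint _
  · exact integral_fintype_prod_eq_prod (fun b (y : ℝ) => y ^ (S.filter fun k => a k = b).card)

lemma wick_rec {A K : Type*} [Fintype A] [DecidableEq A] [DecidableEq K] (S : Finset K) (a : K → A)
    (k₀ : K) (hk : k₀ ∉ S) :
    ∏ b, gmom ((insert k₀ S).filter fun k => a k = b).card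
      = ∑ l ∈ S, (if a k₀ = a l then 1 else 0) *
          ∏ b, gmom ((S.erase l).filter fun k => a k = b).card := by
  have h1 : ∀ l ∈ S, (if a k₀ = a l then (1 : ℝ) else 0) *
          ∏ b, gmom ((S.erase l).filter fun k => a k = b).card
      = if a l = a k₀ then gmom ((S.filter fun k => a k = a k₀).card - 1) *
          ∏ b ∈ Finset.univ.erase (a k₀), gmom (S.filter fun k => a k = b).card else 0 := by
    intro l hl
    by_cases h : a l = a k₀
    · rw [if_pos h, if_pos h.symm, one_mul, ← Finset.mul_prod_erase _ _ (Finset.mem_univ (a k₀))]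
      refine congrArg₂ _ (congrArg _ ?_) ?_
      · rw [Finset.filter_erase, Finset.card_erase_of_mem]
        simp [hl, h]
      · refine Finset.prod_congr rfl fun b hb => ?_
        rw [Finset.filter_erase, Finset.erase_eq_of_notMem]
        simp only [Finset.mem_filter, not_and]
        intro _ h2
        exact (Finset.mem_erase.1 hb).1 (h2.symm.trans h)
    · rw [if_neg h, if_neg (Ne.symm h), zero_mul]
  rw [Finset.sum_congr rfl h1, ← Finset.sum_filter, Finset.sum_const, nsmul_eq_mul, ← mul_assoc,
    ← gmom_succ, ← Finset.mul_prod_erase _ _ (Finset.mem_univ (a k₀))]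
  refine congrArg₂ _ (congrArg _ ?_) ?_
  · rw [Finset.filter_insert, if_pos rfl, Finset.card_insert_of_notMem]
    simp [hk]
  · refine Finset.prod_congr rfl fun b hb => ?_
    rw [Finset.filter_insert, if_neg (Finset.mem_erase.1 hb).1.symm]

/-- delta tensor -/
def dlt {R : Type*} [CommSemiring R] {m n : ℕ} (τ : Equiv.Perm (Fin m)) (i : Fin m → Fin n) : R :=
  ∏ k ∈ Finset.univ.filter fun k : Fin m => k < τ k, (if i k = i (τ k) then (1 : R) else 0)

lemma dlt_swap {m n : ℕ} (τ : Equiv.Perm (Fin m)) (a l : Fin m) (hal : a ≠ l)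
    (ha : τ a = a) (hl : τ l = l) (i : Fin m → Fin n) :
    (dlt (τ * Equiv.swap a l) i : ℝ) = (if i a = i l then 1 else 0) * dlt τ i := by
  wlog h : a < l generalizing a l
  · rw [Equiv.swap_comm, this l a hal.symm hl ha (by grind)]
    simp only [eq_comm]
  unfold dlt
  have hf : (Finset.univ.filter fun k : Fin m => k < (τ * Equiv.swap a l) k)
      = insert a (Finset.univ.filter fun k : Fin m => k < τ k) := by
    ext k
    rw [Finset.mem_insert, Finset.mem_filter, Finset.mem_filter, Equiv.Perm.mul_apply]
    simp only [Finset.mem_univ, true_and]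
    by_cases hka : k = a
    · subst hka; simp [hl, h]
    by_cases hkl : k = l
    · subst hkl; simp [ha, hl, hka, h.le]
    rw [Equiv.swap_apply_of_ne_of_ne hka hkl]; simp [hka]
  rw [hf, Finset.prod_insert (by simp [ha])]
  congr 1
  · simp [hl]
  · refine Finset.prod_congr rfl fun k hk => ?_
    have hk' := (Finset.mem_filter.1 hk).2
    have hka : k ≠ a := by rintro rfl; simp [ha] at hk'
    have hkl : k ≠ l := by rintro rfl; simp [hl] at hk'
    rw [Equiv.Perm.mul_apply, Equiv.swap_apply_of_ne_of_ne hka hkl]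

lemma wick_mem {m n : ℕ} (j : Fin m → Fin n) (N : ℕ) : ∀ (S : Finset (Fin m)), S.card = N →
    (fun i : Fin m → Fin n => ∏ b : Fin n × Fin n, gmom (S.filter fun k => (i k, j k) = b).card)
      ∈ Submodule.span ℝ {F : (Fin m → Fin n) → ℝ | ∃ τ : Equiv.Perm (Fin m),
        τ * τ = 1 ∧ (∀ x, τ x ≠ x ↔ x ∈ S) ∧ F = dlt τ} := by
  induction N using Nat.strong_induction_on with
  | _ N ih =>
  intro S hS
  rcases S.eq_empty_or_nonempty with rfl | ⟨k₀, hk₀⟩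
  · refine Submodule.subset_span ⟨1, by simp, by simp, ?_⟩
    ext i
    simp [gmom_zero, dlt]
  · obtain ⟨S', hS', rfl⟩ : ∃ S', k₀ ∉ S' ∧ S = insert k₀ S' :=
      ⟨S.erase k₀, by simp, (Finset.insert_erase hk₀).symm⟩
    have : (fun i : Fin m → Fin n =>
          ∏ b : Fin n × Fin n, gmom ((insert k₀ S').filter fun k => (i k, j k) = b).card)
        = ∑ l ∈ S', (if j k₀ = j l then (1 : ℝ) else 0) •
          LinearMap.mulLeft ℝ (fun i : Fin m → Fin n => if i k₀ = i l then (1 : ℝ) else 0)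
          (fun i => ∏ b : Fin n × Fin n, gmom ((S'.erase l).filter fun k => (i k, j k) = b).card) := by
      ext i
      rw [wick_rec S' (fun k => (i k, j k)) k₀ hS']
      simp only [Finset.sum_apply, Pi.smul_apply, LinearMap.mulLeft_apply, Pi.mul_apply, smul_eq_mul]
      refine Finset.sum_congr rfl fun l _ => ?_
      rw [← mul_assoc]
      congr 1
      simp only [Prod.mk.injEq]
      split_ifs <;> simp_all
    rw [this]
    refine Submodule.sum_mem _ fun l hl => Submodule.smul_mem _ _ ?_
    have hne : k₀ ≠ l := by rintro rfl; exact hS' hl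
    have hc : (S'.erase l).card < N := by
      rw [← hS, Finset.card_insert_of_notMem hS']
      have := Finset.card_erase_le (s := S') (a := l); omega
    have hm := Submodule.mem_map_of_mem (f := LinearMap.mulLeft ℝ
      (fun i : Fin m → Fin n => if i k₀ = i l then (1 : ℝ) else 0)) (ih _ hc (S'.erase l) rfl)
    rw [Submodule.map_span] at hm
    refine Submodule.span_mono ?_ hm
    rintro _ ⟨_, ⟨τ, h1, h2, rfl⟩, rfl⟩
    have hτa : τ k₀ = k₀ := by
      by_contra h; exact hS' (Finset.mem_of_mem_erase ((h2 _).1 h))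
    have hτl : τ l = l := by
      by_contra h; simpa using (h2 _).1 h
    refine ⟨τ * Equiv.swap k₀ l, ?_, ?_, ?_⟩
    · ext x
      have h1x : ∀ x, τ (τ x) = x := fun x => by rw [← Equiv.Perm.mul_apply, h1]; rfl
      simp only [Equiv.Perm.mul_apply, Equiv.Perm.one_apply]
      by_cases hxa : x = k₀
      · subst hxa; simp [hτa, hτl]
      by_cases hxl : x = l
      · subst hxl; simp [hτa, hτl]
      rw [Equiv.swap_apply_of_ne_of_ne hxa hxl, Equiv.swap_apply_of_ne_of_ne, h1x]
      · intro h; apply hxa; rw [← h1x x, h, hτa]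
      · intro h; apply hxl; rw [← h1x x, h, hτl]
    · intro x
      rw [Equiv.Perm.mul_apply]
      by_cases hxa : x = k₀
      · subst hxa; simp [hτl, hne.symm]
      by_cases hxl : x = l
      · subst hxl; simp [hτa, hne, hl]
      rw [Equiv.swap_apply_of_ne_of_ne hxa hxl, h2]
      simp [hxa, hxl]
    · ext i
      rw [dlt_swap τ k₀ l hne hτa hτl]
      rfl

/-- tensor power of a matrix -/
def tpw {R : Type*} [CommSemiring R] {m n : ℕ} (G : Matrix (Fin n) (Fin n) R)
    (i j : Fin m → Fin n) : R := ∏ k, G (i k) (j k)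

lemma tpw_mul {R : Type*} [CommSemiring R] {m n : ℕ} (A B : Matrix (Fin n) (Fin n) R)
    (i j : Fin m → Fin n) : tpw (A * B) i j = ∑ l, tpw A i l * tpw B l j := by
  unfold tpw
  simp only [Matrix.mul_apply]
  rw [Finset.prod_univ_sum]
  simp [Fintype.piFinset_univ, Finset.prod_mul_distrib]

lemma tpw_one {R : Type*} [CommSemiring R] {m n : ℕ} 
    (i j : Fin m → Fin n) : tpw (1 : Matrix (Fin n) (Fin n) R) i j = if i = j then 1 else 0 := by
  unfold tpw
  simp only [Matrix.one_apply]
  split_ifs with h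
  · subst h; simp
  · obtain ⟨k, hk⟩ := Function.ne_iff.1 h
    exact Finset.prod_eq_zero (Finset.mem_univ k) (if_neg hk)

/-- pairs of values -/
def pairEquiv {m n : ℕ} (τ : Equiv.Perm (Fin m)) (h1 : ∀ x, τ (τ x) = x) (h2 : ∀ x, τ x ≠ x) :
    (Fin m → Fin n) ≃ ({k : Fin m // k < τ k} → Fin n × Fin n) where
  toFun i := fun l => (i l, i (τ l))
  invFun g := fun k => if h : k < τ k then (g ⟨k, h⟩).1 else
    (g ⟨τ k, by rw [h1]; exact lt_of_le_of_ne (not_lt.1 h) (h2 k)⟩).2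
  left_inv i := by
    ext k
    by_cases h : k < τ k <;> simp [h, h1]
  right_inv g := by
    ext l
    · simp [l.2]
    · have := l.2
      have h3 : ¬ τ (l : Fin m) < l := not_lt.2 this.le
      simp [h1, h3]

lemma prod_pairs {M : Type*} [CommMonoid M] {m : ℕ} (τ : Equiv.Perm (Fin m))
    (h1 : ∀ x, τ (τ x) = x) (h2 : ∀ x, τ x ≠ x) (f : Fin m → M) :
    ∏ k, f k = ∏ l : {k : Fin m // k < τ k}, (f l * f (τ l)) := by
  rw [← Finset.prod_filter_mul_prod_filter_not Finset.univ (fun k => k < τ k) f]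
  have : ∏ x ∈ Finset.univ.filter (fun k => ¬ k < τ k), f x
      = ∏ x ∈ Finset.univ.filter (fun k => k < τ k), f (τ x) := by
    symm
    refine Finset.prod_bij (fun x _ => τ x) ?_ ?_ ?_ ?_
    · intro x hx
      simp only [Finset.mem_filter, Finset.mem_univ, true_and] at hx ⊢
      rw [h1]; exact not_lt.2 hx.le
    · intro x _ y _ h; exact τ.injective h
    · intro y hy
      simp only [Finset.mem_filter, Finset.mem_univ, true_and] at hy
      refine ⟨τ y, ?_, h1 y⟩
      simp only [Finset.mem_filter, Finset.mem_univ, true_and, h1]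
      exact lt_of_le_of_ne (not_lt.1 hy) (h2 y)
    · intros; rfl
  rw [this, ← Finset.prod_mul_distrib]
  exact (Finset.prod_subtype (p := fun k : Fin m => k < τ k) _ (by simp) (fun k => f k * f (τ k)))

lemma sum_prod_fun {L P R : Type*} [Fintype L] [DecidableEq L] [Fintype P] [CommSemiring R]
    (f : L → P → R) : ∑ g : L → P, ∏ l, f l (g l) = ∏ l, ∑ p, f l p := by
  rw [Finset.prod_univ_sum, Fintype.piFinset_univ]

lemma dlt_inv {m n : ℕ} (τ : Equiv.Perm (Fin m)) (h1 : ∀ x, τ (τ x) = x) (h2 : ∀ x, τ x ≠ x)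
    (u : Matrix (Fin n) (Fin n) ℝ) (hu : u.transpose * u = 1) (j : Fin m → Fin n) :
    ∑ i, tpw u i j * dlt τ i = (dlt τ j : ℝ) := by
  have hd : ∀ i : Fin m → Fin n, (dlt τ i : ℝ) = ∏ l : {k : Fin m // k < τ k},
      (if i l = i (τ l) then (1 : ℝ) else 0) := fun i => by
    unfold dlt
    exact (Finset.prod_subtype (p := fun k : Fin m => k < τ k) _ (by simp)
      (fun k => if i k = i (τ k) then (1 : ℝ) else 0))
  have hs : ∀ i : Fin m → Fin n, tpw u i j * dlt τ i = ∏ l : {k : Fin m // k < τ k},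
      (fun (l : {k : Fin m // k < τ k}) (p : Fin n × Fin n) => (u p.1 (j l) * u p.2 (j (τ l)))
        * if p.1 = p.2 then (1 : ℝ) else 0) l (pairEquiv τ h1 h2 i l) := fun i => by
    rw [hd]
    unfold tpw
    rw [prod_pairs τ h1 h2, ← Finset.prod_mul_distrib]
    rfl
  rw [Finset.sum_congr rfl fun i _ => hs i]
  refine ((pairEquiv τ h1 h2).sum_comp (fun g => ∏ l : {k : Fin m // k < τ k},
      (fun (l : {k : Fin m // k < τ k}) (p : Fin n × Fin n) => (u p.1 (j l) * u p.2 (j (τ l)))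
        * if p.1 = p.2 then (1 : ℝ) else 0) l (g l))).trans ?_
  refine (sum_prod_fun (R := ℝ) (fun (l : {k : Fin m // k < τ k}) (p : Fin n × Fin n) =>
    (u p.1 (j l) * u p.2 (j (τ l))) * if p.1 = p.2 then (1 : ℝ) else 0)).trans ?_
  rw [hd]
  refine Finset.prod_congr rfl fun l _ => ?_
  have := congrFun (congrFun hu (j l)) (j (τ l))
  rw [Matrix.mul_apply, Matrix.one_apply] at this
  rw [← this, Fintype.sum_prod_type]
  simp

/-- quadratic form -/
def qf {m n : ℕ} (T : (Fin m → Fin n) → ℝ) (G : Matrix (Fin n) (Fin n) ℝ) : ℝ :=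
  ∑ i, ∑ j, T i * tpw G i j * T j

lemma qf_cont {m n : ℕ} (T : (Fin m → Fin n) → ℝ) : Continuous (qf T) := by
  unfold qf tpw
  fun_prop

open scoped MatrixOrder in
lemma qf_nonneg_of_det {m n : ℕ} (T : (Fin m → Fin n) → ℝ)
    (hT : ∀ u : Matrix (Fin n) (Fin n) ℝ, u.transpose * u = 1 → ∀ j, ∑ i, tpw u i j * T i = T j)
    (G : Matrix (Fin n) (Fin n) ℝ) (hG : IsUnit G.det) : 0 ≤ qf T G := by
  obtain ⟨u, B, hu, hGB⟩ : ∃ u B : Matrix (Fin n) (Fin n) ℝ, u.transpose * u = 1 ∧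
      G = u * (B.transpose * B) := by
    have hps : (G.transpose * G).PosSemidef := by
      have := Matrix.posSemidef_conjTranspose_mul_self G
      simpa using this
    have hRR : CFC.sqrt (G.transpose * G) * CFC.sqrt (G.transpose * G) = G.transpose * G :=
      CFC.sqrt_mul_sqrt_self _ hps.nonneg
    have hR0 : 0 ≤ CFC.sqrt (G.transpose * G) := CFC.sqrt_nonneg _
    generalize CFC.sqrt (G.transpose * G) = R at hRR hR0
    obtain ⟨B, hB⟩ := CStarAlgebra.nonneg_iff_eq_star_mul_self.mp hR0
    have hRt : R.transpose = R := by
      have := (Matrix.nonneg_iff_posSemidef.1 hR0).isHermitian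
      simpa [Matrix.IsHermitian] using this
    have hRd : IsUnit R.det := by
      have := congrArg Matrix.det hRR
      rw [Matrix.det_mul, Matrix.det_mul, Matrix.det_transpose] at this
      rw [isUnit_iff_ne_zero] at hG ⊢
      intro h
      rw [h] at this
      simp [hG] at this
    refine ⟨G * R⁻¹, B, ?_, ?_⟩
    · rw [Matrix.transpose_mul, Matrix.transpose_nonsing_inv, hRt, Matrix.mul_assoc,
        ← Matrix.mul_assoc _ G, ← hRR, Matrix.mul_assoc, Matrix.mul_nonsing_inv _ hRd,
        Matrix.mul_one, Matrix.nonsing_inv_mul _ hRd]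
    · have : B.transpose * B = R := by rw [hB]; simp [Matrix.star_eq_conjTranspose]
      rw [this, Matrix.mul_assoc, Matrix.nonsing_inv_mul _ hRd, Matrix.mul_one]
  have : qf T G = ∑ c, (∑ l, tpw B c l * T l) ^ 2 := by
    have e1 : ∀ j, ∑ i, T i * tpw G i j = ∑ l, T l * tpw (B.transpose * B) l j := by
      intro j
      simp_rw [hGB, tpw_mul u, Finset.mul_sum]
      rw [Finset.sum_comm]
      refine Finset.sum_congr rfl fun l _ => ?_
      rw [← hT u hu l, Finset.sum_mul]
      refine Finset.sum_congr rfl fun i _ => ?_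
      ring
    have e2 : ∀ l j, tpw (m := m) (B.transpose * B) l j = ∑ c, tpw B c l * tpw B c j := by
      intro l j
      rw [tpw_mul]; rfl
    unfold qf
    rw [Finset.sum_comm]
    simp_rw [← Finset.sum_mul, e1, e2, sq, Finset.sum_mul_sum, Finset.mul_sum, Finset.sum_mul]
    rw [Finset.sum_congr rfl fun j _ => Finset.sum_comm, Finset.sum_comm]
    refine Finset.sum_congr rfl fun c _ => ?_
    rw [Finset.sum_comm]
    refine Finset.sum_congr rfl fun l _ => Finset.sum_congr rfl fun j _ => ?_
    ring
  rw [this]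
  positivity

lemma qf_nonneg {m n : ℕ} (T : (Fin m → Fin n) → ℝ)
    (hT : ∀ u : Matrix (Fin n) (Fin n) ℝ, u.transpose * u = 1 → ∀ j, ∑ i, tpw u i j * T i = T j)
    (G : Matrix (Fin n) (Fin n) ℝ) : 0 ≤ qf T G := by
  have hfin : {x : ℝ | (-G).charpoly.IsRoot x}.Finite :=
    Polynomial.finite_setOfPred_isRoot (Matrix.charpoly_monic _).ne_zero
  have hd : Dense {x : ℝ | (-G).charpoly.IsRoot x}ᶜ := Set.Countable.dense_compl ℝ (Set.Finite.countable hfin)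
  have hc : Continuous fun x : ℝ => qf T (x • (1 : Matrix (Fin n) (Fin n) ℝ) + G) :=
    (qf_cont T).comp (by fun_prop)
  have hcl : IsClosed {x : ℝ | 0 ≤ qf T (x • (1 : Matrix (Fin n) (Fin n) ℝ) + G)} :=
    isClosed_le continuous_const hc
  have hsub : {x : ℝ | (-G).charpoly.IsRoot x}ᶜ ⊆
      {x : ℝ | 0 ≤ qf T (x • (1 : Matrix (Fin n) (Fin n) ℝ) + G)} := by
    intro x hx
    refine qf_nonneg_of_det T hT _ ?_
    rw [isUnit_iff_ne_zero]
    intro h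
    apply hx
    show (-G).charpoly.eval x = 0
    rw [Matrix.eval_charpoly, ← h, sub_neg_eq_add, Matrix.scalar_apply, Matrix.smul_one_eq_diagonal]
  have h0 : (0 : ℝ) ∈ {x : ℝ | 0 ≤ qf T (x • (1 : Matrix (Fin n) (Fin n) ℝ) + G)} := by
    have := hcl.closure_subset_iff.2 hsub
    exact this (hd 0)
  simpa using h0

/-- The span of pairing tensors. -/
def Wsp (R : Type*) [CommSemiring R] (m n : ℕ) : Submodule R ((Fin m → Fin n) → R) :=
  Submodule.span R {F | ∃ τ : Equiv.Perm (Fin m), τ * τ = 1 ∧ (∀ x, τ x ≠ x) ∧ F = dlt τ}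

lemma qf_zero {m n : ℕ} (T : (Fin m → Fin n) → ℝ)
    (hT : ∀ u : Matrix (Fin n) (Fin n) ℝ, u.transpose * u = 1 → ∀ j, ∑ i, tpw u i j * T i = T j)
    (hW : ∀ F ∈ Wsp ℝ m n, ∑ i, T i * F i = 0) : T = 0 := by
  let γ : Measure (Fin n × Fin n → ℝ) := Measure.pi fun _ => gaussianReal 0 1
  let M : (Fin n × Fin n → ℝ) → Matrix (Fin n) (Fin n) ℝ := fun x => Matrix.of fun a b => x (a, b)
  have hMc : Continuous M := by
    refine continuous_matrix fun a b => ?_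
    exact continuous_apply (a, b)
  have hterm : ∀ i j : Fin m → Fin n, Integrable (fun x => T i * tpw (M x) i j * T j) γ := by
    intro i j
    exact (((gauss_prod Finset.univ fun k => (i k, j k)).1.const_mul (T i)).mul_const (T j))
  have hint : Integrable (fun x => qf T (M x)) γ :=
    integrable_finsetSum _ fun i _ => integrable_finsetSum _ fun j _ => hterm i j
  have hI : ∫ x, qf T (M x) ∂γ = 0 := by
    unfold qf
    rw [integral_finsetSum _ fun i _ => integrable_finsetSum _ fun j _ => hterm i j]
    rw [Finset.sum_congr rfl fun i _ => integral_finsetSum _ fun j _ => hterm i j]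
    rw [Finset.sum_comm]
    refine Finset.sum_eq_zero fun j _ => ?_
    have hw := wick_mem j m Finset.univ (by simp)
    have hw' := hW _ (by simpa [Wsp] using hw)
    calc _ = ∑ i, (T i * ∏ b : Fin n × Fin n,
            gmom (Finset.univ.filter fun k => (i k, j k) = b).card) * T j := by
          refine Finset.sum_congr rfl fun i _ => ?_
          rw [integral_mul_const, integral_const_mul,
            ← (gauss_prod Finset.univ fun k => (i k, j k)).2]
          rfl
      _ = 0 := by rw [← Finset.sum_mul, hw', zero_mul]
  have hpos : Measure.IsOpenPosMeasure (gaussianReal 0 1) :=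
    (gaussianReal_absolutelyContinuous' 0 one_ne_zero).isOpenPosMeasure
  have hpos' : Measure.IsOpenPosMeasure γ := by
    show Measure.IsOpenPosMeasure (Measure.pi fun _ => gaussianReal 0 1)
    infer_instance
  have hae : (fun x => qf T (M x)) =ᵐ[γ] 0 :=
    (integral_eq_zero_iff_of_nonneg (fun x => qf_nonneg T hT (M x)) hint).1 hI
  have heq := (Continuous.ae_eq_iff_eq γ ((qf_cont T).comp hMc) continuous_const).1 hae
  have h1 := congrFun heq (fun p => (1 : Matrix (Fin n) (Fin n) ℝ) p.1 p.2)
  have h2 : qf T 1 = 0 := h1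
  unfold qf at h2
  simp only [tpw_one] at h2
  simp at h2
  ext i
  have := (Finset.sum_eq_zero_iff_of_nonneg fun i _ => mul_self_nonneg (T i)).1 h2 i (Finset.mem_univ i)
  simpa using this

lemma real_fft {m n : ℕ} (T : (Fin m → Fin n) → ℝ)
    (hT : ∀ u : Matrix (Fin n) (Fin n) ℝ, u.transpose * u = 1 → ∀ j, ∑ i, tpw u i j * T i = T j) :
    T ∈ Wsp ℝ m n := by
  let e := WithLp.linearEquiv 2 ℝ ((Fin m → Fin n) → ℝ)
  let W' : Submodule ℝ (EuclideanSpace ℝ (Fin m → Fin n)) := (Wsp ℝ m n).comap e.toLinearMap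
  obtain ⟨y, hy, z, hz, hyz⟩ := W'.exists_add_mem_mem_orthogonal (e.symm T)
  have hyz' : T = e y + e z := by rw [← map_add, ← hyz]; simp
  have hyinv : ∀ F ∈ Wsp ℝ m n, ∀ u : Matrix (Fin n) (Fin n) ℝ, u.transpose * u = 1 →
      ∀ j, ∑ i, tpw u i j * F i = F j := by
    intro F hF u hu j
    induction hF using Submodule.span_induction with
    | mem F hF =>
      obtain ⟨τ, h1, h2, rfl⟩ := hF
      exact dlt_inv τ (fun x => by rw [← Equiv.Perm.mul_apply, h1]; rfl) h2 u hu j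
    | zero => simp
    | add F G _ _ hF hG => simp [mul_add, Finset.sum_add_distrib, hF, hG]
    | smul c F _ hF =>
      simp only [Pi.smul_apply, smul_eq_mul]
      rw [← hF, Finset.mul_sum]
      exact Finset.sum_congr rfl fun i _ => by ring
  have hz0 : e z = 0 := by
    refine qf_zero (e z) ?_ ?_
    · intro u hu j
      have hz' : e z = T - e y := by rw [hyz']; simp
      rw [hz']
      simp only [Pi.sub_apply, mul_sub, Finset.sum_sub_distrib]
      rw [hT u hu]
      exact congrArg _ (hyinv _ hy u hu j)
    · intro F hF
      have := (Submodule.mem_orthogonal _ _).1 hz (e.symm F) (by simpa [W'] using hF)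
      rw [PiLp.inner_apply] at this
      exact this
  rw [hyz', hz0, add_zero]
  exact hy

lemma complex_fft {m n : ℕ} (T : (Fin m → Fin n) → ℂ)
    (hT : ∀ u : Matrix (Fin n) (Fin n) ℝ, u.transpose * u = 1 →
      ∀ j, ∑ i, tpw (u.map (Complex.ofReal : ℝ → ℂ)) i j * T i = T j) :
    T ∈ Wsp ℂ m n := by
  have ht : ∀ (u : Matrix (Fin n) (Fin n) ℝ) (i j : Fin m → Fin n),
      tpw (u.map (Complex.ofReal : ℝ → ℂ)) i j = ((tpw u i j : ℝ) : ℂ) := by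
    intro u i j; simp [tpw]
  have hre : (fun i => (T i).re) ∈ Wsp ℝ m n := by
    refine real_fft _ fun u hu j => ?_
    have := congrArg Complex.re (hT u hu j)
    simpa [ht] using this
  have him : (fun i => (T i).im) ∈ Wsp ℝ m n := by
    refine real_fft _ fun u hu j => ?_
    have := congrArg Complex.im (hT u hu j)
    simpa [ht] using this
  have hcast : ∀ F ∈ Wsp ℝ m n, (fun i => ((F i : ℝ) : ℂ)) ∈ Wsp ℂ m n := by
    intro F hF
    induction hF using Submodule.span_induction with
    | mem F hF =>
      obtain ⟨τ, h1, h2, rfl⟩ := hF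
      refine Submodule.subset_span ⟨τ, h1, h2, ?_⟩
      ext i
      unfold dlt
      rw [Complex.ofReal_prod]
      refine Finset.prod_congr rfl fun k _ => ?_
      split_ifs <;> simp
    | zero =>
      convert (Wsp ℂ m n).zero_mem using 1
      ext i; simp
    | add F G _ _ hF hG =>
      convert (Wsp ℂ m n).add_mem hF hG using 1
      ext i; simp
    | smul c F _ hF =>
      convert (Wsp ℂ m n).smul_mem (c : ℂ) hF using 1
      ext i; simp
  convert (Wsp ℂ m n).add_mem (hcast _ hre) ((Wsp ℂ m n).smul_mem Complex.I (hcast _ him)) using 1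
  ext i
  simp only [Pi.add_apply, Pi.smul_apply, smul_eq_mul]
  rw [mul_comm]; exact (Complex.re_add_im _).symm

/-- first half -/
def hfst {d : ℕ} {α : Type*} (i : Fin (2 * d) → α) : Fin d → α :=
  fun j => i (⟨(j : ℕ), by have := j.isLt; omega⟩ : Fin (2 * d))

/-- second half -/
def hsnd {d : ℕ} {α : Type*} (i : Fin (2 * d) → α) : Fin d → α :=
  fun j => i (⟨d + (j : ℕ), by have := j.isLt; omega⟩ : Fin (2 * d))

/-- splitting -/
def splitEquiv (d : ℕ) (α : Type*) : (Fin (2 * d) → α) ≃ (Fin d → α) × (Fin d → α) where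
  toFun i := (hfst i, hsnd i)
  invFun p := fun k => if h : (k : ℕ) < d then p.1 ⟨k, h⟩ else p.2 ⟨k - d, by omega⟩
  left_inv i := by
    ext k
    by_cases h : (k : ℕ) < d
    · simp [h, hfst]
    · simp only [h, hsnd, dite_false]
      congr 1
      ext
      simp; omega
  right_inv p := by
    refine Prod.ext ?_ ?_
    · ext k; simp [hfst]
    · ext k; simp [hsnd]

lemma prod_split {d : ℕ} {M : Type*} [CommMonoid M] (g : Fin (2 * d) → M) :
    ∏ k, g k = (∏ j, hfst g j) * ∏ j, hsnd g j := by
  have h : d + d = 2 * d := by omega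
  rw [← Fin.prod_congr' g h, Fin.prod_univ_add]
  rfl

lemma tpw_split {R : Type*} [CommSemiring R] {d n : ℕ} (u : Matrix (Fin n) (Fin n) R)
    (i j : Fin (2 * d) → Fin n) :
    tpw u i j = tpw u (hfst i) (hfst j) * tpw u (hsnd i) (hsnd j) := prod_split _

/-- tensor basis -/
noncomputable def tbas (n d : ℕ) :
    Module.Basis (Fin d → Fin n) ℂ (⨂[ℂ] _ : Fin d, (Fin n → ℂ)) :=
  Basis.piTensorProduct (fun _ : Fin d => Pi.basisFun ℂ (Fin n))

lemma tbas_apply (n d : ℕ) (a : Fin d → Fin n) :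
    tbas n d a = PiTensorProduct.tprod ℂ fun j => Pi.single (a j) (1 : ℂ) := by
  simp [tbas, Basis.piTensorProduct_apply]

lemma tbas_map (n d : ℕ) (u : Matrix (Fin n) (Fin n) ℂ) (a c : Fin d → Fin n) :
    (tbas n d).repr (PiTensorProduct.map (fun _ : Fin d => Matrix.mulVecLin u) (tbas n d a)) c
      = tpw u c a := by
  rw [tbas_apply, PiTensorProduct.map_tprod, tbas, Basis.piTensorProduct_repr_tprod_apply]
  simp [tpw]

/-- elementary operators -/
noncomputable def elemOp (n d : ℕ) (i : Fin (2 * d) → Fin n) :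
    (⨂[ℂ] _ : Fin d, (Fin n → ℂ)) →ₗ[ℂ] ⨂[ℂ] _ : Fin d, (Fin n → ℂ) :=
      LinearMap.smulRight
        (PiTensorProduct.lift
          ((MultilinearMap.mkPiAlgebra ℂ (Fin d) ℂ).compLinearMap fun j =>
            LinearMap.proj (i (⟨(j : ℕ), by have := j.isLt; omega⟩ : Fin (2 * d)))))
        (PiTensorProduct.tprod ℂ fun j : Fin d =>
          Pi.single (i (⟨d + (j : ℕ), by have := j.isLt; omega⟩ : Fin (2 * d))) (1 : ℂ))

lemma elemOp_apply (n d : ℕ) (i : Fin (2 * d) → Fin n) (a : Fin d → Fin n) :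
    elemOp n d i (tbas n d a) = (if hfst i = a then (1 : ℂ) else 0) • tbas n d (hsnd i) := by
  rw [elemOp, LinearMap.smulRight_apply, tbas_apply, tbas_apply]
  congr 1
  rw [PiTensorProduct.lift.tprod]
  have := tpw_one (R := ℂ) (hfst i) a
  rw [← this]
  simp only [MultilinearMap.compLinearMap_apply, MultilinearMap.mkPiAlgebra_apply,
    LinearMap.proj_apply, tpw, hfst, Pi.single_apply, Matrix.one_apply]
  refine Finset.prod_congr rfl fun k _ => ?_
  by_cases h : i (⟨(k : ℕ), by have := k.isLt; omega⟩ : Fin (2 * d)) = a k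
  · exact (if_pos h).trans (if_pos h).symm
  · exact (if_neg h).trans (if_neg h).symm

/-- the operator of a coefficient tensor -/
noncomputable def opOf (n d : ℕ) : ((Fin (2 * d) → Fin n) → ℂ) →ₗ[ℂ]
    ((⨂[ℂ] _ : Fin d, (Fin n → ℂ)) →ₗ[ℂ] ⨂[ℂ] _ : Fin d, (Fin n → ℂ)) :=
  Fintype.linearCombination ℂ (elemOp n d)

lemma opOf_coeff (n d : ℕ)
    (f : (⨂[ℂ] _ : Fin d, (Fin n → ℂ)) →ₗ[ℂ] ⨂[ℂ] _ : Fin d, (Fin n → ℂ)) :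
    opOf n d (fun i => (tbas n d).repr (f (tbas n d (hfst i))) (hsnd i)) = f := by
  refine (tbas n d).ext fun a => ?_
  rw [opOf, Fintype.linearCombination_apply, LinearMap.sum_apply]
  simp only [LinearMap.smul_apply, elemOp_apply]
  refine ((splitEquiv d (Fin n)).sum_comp (fun p : (Fin d → Fin n) × (Fin d → Fin n) =>
    ((tbas n d).repr (f (tbas n d p.1)) p.2) • (if p.1 = a then (1 : ℂ) else 0) •
      tbas n d p.2)).trans ?_
  rw [Fintype.sum_prod_type, Finset.sum_eq_single a]
  · simp only [if_true, one_smul]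
    exact (tbas n d).sum_repr _
  · intro b _ hb
    simp [hb]
  · simp

/-- **First fundamental theorem for the orthogonal group, endomorphism form.**
Every endomorphism of `(ℂ^n)^{⊗d}` commuting with `u^{⊗d}` for every real orthogonal
matrix `u ∈ O(n)` is a linear combination of the operators `J_τ`, where `τ` runs over the
partitions of `{1, …, 2d}` into pairs (fixed-point-free involutions). -/
theorem fft_orthogonal_group
    (n d : ℕ) (hn : 1 ≤ n) (hd : 1 ≤ d)
    (f : (⨂[ℂ] _ : Fin d, (Fin n → ℂ)) →ₗ[ℂ] ⨂[ℂ] _ : Fin d, (Fin n → ℂ))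
    (hf : ∀ u : Matrix.orthogonalGroup (Fin n) ℝ,
      f ∘ₗ (PiTensorProduct.map fun _ : Fin d =>
          Matrix.mulVecLin ((u : Matrix (Fin n) (Fin n) ℝ).map (Complex.ofReal : ℝ → ℂ)))
        = (PiTensorProduct.map fun _ : Fin d =>
          Matrix.mulVecLin ((u : Matrix (Fin n) (Fin n) ℝ).map (Complex.ofReal : ℝ → ℂ)))
          ∘ₗ f) :
    f ∈ Submodule.span ℂ
      {J | ∃ τ : Equiv.Perm (Fin (2 * d)),
        τ * τ = 1 ∧ (∀ x, τ x ≠ x) ∧ J = pairingMap n d τ} := by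
  have hmem : (fun i => (tbas n d).repr (f (tbas n d (hfst i))) (hsnd i)) ∈ Wsp ℂ (2 * d) n := by
    refine complex_fft _ fun u hu j => ?_
    have huo : u ∈ Matrix.orthogonalGroup (Fin n) ℝ := by
      rw [Matrix.mem_orthogonalGroup_iff']
      simpa [Matrix.star_eq_conjTranspose] using hu
    have hfu := hf ⟨u, huo⟩
    simp only at hfu
    set U : Matrix (Fin n) (Fin n) ℂ := u.map (Complex.ofReal : ℝ → ℂ) with hU
    have hUU : U.transpose * U = 1 := by
      have := congrArg (fun A : Matrix (Fin n) (Fin n) ℝ => A.map (Complex.ofRealHom)) hu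
      simp only [Matrix.map_mul] at this
      rw [Matrix.map_one _ (map_zero _) (map_one _)] at this
      exact this
    have key : ∀ a b : Fin d → Fin n,
        ∑ a', tpw U a' a * (tbas n d).repr (f (tbas n d a')) b
          = ∑ b', (tbas n d).repr (f (tbas n d a)) b' * tpw U b b' := by
      intro a b
      have h := congrArg (fun x => (tbas n d).repr x b) (LinearMap.congr_fun hfu (tbas n d a))
      simp only [LinearMap.comp_apply] at h
      have h1 := (tbas n d).sum_repr
        (PiTensorProduct.map (fun _ : Fin d => Matrix.mulVecLin U) (tbas n d a))
      have h2 := (tbas n d).sum_repr (f (tbas n d a))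
      rw [← h1] at h
      rw [← h2] at h
      simp only [map_sum, map_smul, Finsupp.coe_finsetSum, Finset.sum_apply, Finsupp.smul_apply,
        tbas_map, smul_eq_mul] at h
      exact h
    have horth : ∀ c b' : Fin d → Fin n, ∑ b, tpw U b c * tpw U b b' = if c = b' then 1 else 0 := by
      intro c b'
      rw [← tpw_one, ← hUU, tpw_mul]
      rfl
    simp only [tpw_split U]
    refine ((splitEquiv d (Fin n)).sum_comp (fun p : (Fin d → Fin n) × (Fin d → Fin n) =>
      tpw U p.1 (hfst j) * tpw U p.2 (hsnd j) *
        (tbas n d).repr (f (tbas n d p.1)) p.2)).trans ?_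
    rw [Fintype.sum_prod_type, Finset.sum_comm]
    calc _ = ∑ b, tpw U b (hsnd j) * ∑ a', tpw U a' (hfst j) *
            (tbas n d).repr (f (tbas n d a')) b := by
          refine Finset.sum_congr rfl fun b _ => ?_
          rw [Finset.mul_sum]
          exact Finset.sum_congr rfl fun a _ => by ring
      _ = ∑ b', (tbas n d).repr (f (tbas n d (hfst j))) b' *
            ∑ b, tpw U b (hsnd j) * tpw U b b' := by
          simp_rw [key, Finset.mul_sum]
          rw [Finset.sum_comm]
          exact Finset.sum_congr rfl fun a _ => Finset.sum_congr rfl fun b _ => by ring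
      _ = _ := by
          simp_rw [horth]
          simp
  have := Submodule.mem_map_of_mem (f := opOf n d) hmem
  rw [opOf_coeff, Wsp, Submodule.map_span] at this
  refine Submodule.span_mono ?_ this
  rintro _ ⟨_, ⟨τ, h1, h2, rfl⟩, rfl⟩
  refine ⟨τ, h1, h2, ?_⟩
  rw [opOf, Fintype.linearCombination_apply]
  rfl
end

section
/- Let p ≥ 1 and let τ be a fixed-point-free involution of the set {1, …, 2p}. Then there exist a subset S ⊆ {1, …, p} and a permutation σ of {1, …, p} such that, setting θ to be the product of the disjoint transpositions (i, p+i) over all i ∈ S, the involution θ ∘ τ ∘ θ maps i to σ(i) + p for every i ∈ {1, …, p}. -/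
/-- The element `i` of `{1, …, p}` viewed in `{1, …, 2p}` (first half). -/
def loIdx (p : ℕ) (i : Fin p) : Fin (2 * p) :=
  ⟨(i : ℕ), by have := i.isLt; omega⟩

/-- The element `p + i` of `{1, …, 2p}` (second half). -/
def hiIdx (p : ℕ) (i : Fin p) : Fin (2 * p) :=
  ⟨p + (i : ℕ), by have := i.isLt; omega⟩

/-- The product, over `i ∈ S`, of the disjoint transpositions `(i, p+i)` of `{1, …, 2p}`,
as a function: it exchanges `i` and `p + i` for `i ∈ S` and fixes everything else. -/
def swapHalves (p : ℕ) (S : Finset (Fin p)) (x : Fin (2 * p)) : Fin (2 * p) :=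
  if h : (x : ℕ) < p then
    if (⟨(x : ℕ), h⟩ : Fin p) ∈ S then ⟨(x : ℕ) + p, by have := x.isLt; omega⟩ else x
  else
    if (⟨(x : ℕ) - p, by have := x.isLt; omega⟩ : Fin p) ∈ S then
      ⟨(x : ℕ) - p, by have := x.isLt; omega⟩
    else x

theorem exists_two_coloring {X : Type*} [LinearOrder X] (a b : Equiv.Perm X)
    (ha : a * a = 1) (hb : b * b = 1) (fa : ∀ x, a x ≠ x) (fb : ∀ x, b x ≠ x) :
    ∃ c : X → Prop, (∀ x, c (a x) ↔ ¬ c x) ∧ (∀ x, c (b x) ↔ ¬ c x) := by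
  have ha' : ∀ x, a (a x) = x := fun x => by
    simpa using congrArg (fun e : Equiv.Perm X => e x) ha
  have hb' : ∀ x, b (b x) = x := fun x => by
    simpa using congrArg (fun e : Equiv.Perm X => e x) hb
  have ia : a⁻¹ = a := inv_eq_of_mul_eq_one_left ha
  have ib : b⁻¹ = b := inv_eq_of_mul_eq_one_left hb
  have hconj : a * (a * b) * a⁻¹ = (a * b)⁻¹ := by
    rw [mul_inv_rev, ia, ib, ← mul_assoc a a b, ha, one_mul]
  have hz : ∀ (m : ℤ) (x : X), a (((a * b) ^ m) x) = ((a * b) ^ (-m)) (a x) := by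
    intro m x
    have h : a * (a * b) ^ m * a⁻¹ = (a * b) ^ (-m) := by
      rw [← conj_zpow, hconj, inv_zpow, zpow_neg]
    rw [← h]; simp
  have key : ∀ x, ¬ (a * b).SameCycle x (a x) := by
    rintro x ⟨k, hk⟩
    rcases Int.even_or_odd' k with ⟨m, rfl | rfl⟩
    · apply fa (((a * b) ^ m) x)
      rw [hz, ← hk, ← Equiv.Perm.mul_apply, ← zpow_add]
      congr 2; ring
    · apply fb (((a * b) ^ m) x)
      apply a.injective
      rw [hz, ← hk]
      change ((a * b) * (a * b) ^ m) x = ((a * b) ^ (-m) * (a * b) ^ (2 * m + 1)) x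
      rw [← zpow_add, ← zpow_one_add]
      congr 2; ring
  let s := Equiv.Perm.SameCycle.setoid (a * b)
  let q : X → X := fun x => (Quotient.mk s x).out
  have hq : ∀ x y, q x = q y ↔ (a * b).SameCycle x y := by
    intro x y
    exact Quotient.out_inj.trans Quotient.eq
  have hne : ∀ x, q x ≠ q (a x) := fun x h => key x ((hq _ _).1 h)
  have e1 : ∀ x, q (b x) = q (a x) := fun x => (hq _ _).2 ⟨1, by simp [hb']⟩
  have e2 : ∀ x, q (a (b x)) = q x := fun x => (hq _ _).2 (Equiv.Perm.SameCycle.symm ⟨1, by simp⟩)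
  refine ⟨fun x => q x < q (a x), fun x => ?_, fun x => ?_⟩
  · simp only [ha', not_lt]
    exact ⟨le_of_lt, fun h => lt_of_le_of_ne h (hne x).symm⟩
  · simp only [e1, e2, not_lt]
    exact ⟨le_of_lt, fun h => lt_of_le_of_ne h (hne x).symm⟩

theorem swapHalves_lo (p : ℕ) (S : Finset (Fin p)) (i : Fin p) :
    swapHalves p S (loIdx p i) = if i ∈ S then hiIdx p i else loIdx p i := by
  simp [swapHalves, loIdx, hiIdx, add_comm]

theorem swapHalves_hi (p : ℕ) (S : Finset (Fin p)) (i : Fin p) :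
    swapHalves p S (hiIdx p i) = if i ∈ S then loIdx p i else hiIdx p i := by
  simp [swapHalves, loIdx, hiIdx]

theorem lo_or_hi (p : ℕ) (x : Fin (2 * p)) : (∃ i, x = loIdx p i) ∨ ∃ i, x = hiIdx p i := by
  by_cases h : (x : ℕ) < p
  · exact Or.inl ⟨⟨x, h⟩, rfl⟩
  · refine Or.inr ⟨⟨x - p, by have := x.isLt; omega⟩, ?_⟩
    ext
    simp only [hiIdx]
    omega

theorem lo_ne_hi (p : ℕ) (i j : Fin p) : loIdx p i ≠ hiIdx p j := by
  intro h
  have := congrArg Fin.val h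
  simp only [loIdx, hiIdx] at this
  omega

theorem swapHalves_invol (p : ℕ) (S : Finset (Fin p)) :
    Function.Involutive (swapHalves p S) := by
  intro x
  rcases lo_or_hi p x with ⟨i, rfl⟩ | ⟨i, rfl⟩ <;> by_cases h : i ∈ S <;>
    simp [swapHalves_lo, swapHalves_hi, h]

/-- **Every pairing can be straightened into a permutation.** For every fixed-point-free
involution `τ` of `{1, …, 2p}` there are a subset `S ⊆ {1, …, p}` and a permutation `σ`
of `{1, …, p}` such that, with `θ` the product of the transpositions `(i, p+i)` for
`i ∈ S`, the involution `θ ∘ τ ∘ θ` maps `i` to `σ(i) + p` for every `i ∈ {1, …, p}`. -/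
theorem exists_straightening_of_fixed_point_free_involution
    (p : ℕ) (hp : 1 ≤ p) (τ : Equiv.Perm (Fin (2 * p)))
    (hinv : τ * τ = 1) (hfpf : ∀ x, τ x ≠ x) :
    ∃ (S : Finset (Fin p)) (σ : Equiv.Perm (Fin p)),
      ∀ i : Fin p, swapHalves p S (τ (swapHalves p S (loIdx p i))) = hiIdx p (σ i) := by
  classical
  obtain ⟨c, hc1, hc2⟩ := exists_two_coloring τ
    (swapHalves_invol p Finset.univ).toPerm hinv
    (by ext x; simp [swapHalves_invol p Finset.univ x]) hfpf
    (by
      intro x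
      rcases lo_or_hi p x with ⟨i, rfl⟩ | ⟨i, rfl⟩
      · simpa [swapHalves_lo] using (lo_ne_hi p i i).symm
      · simpa [swapHalves_hi] using lo_ne_hi p i i)
  have hlh : ∀ i, c (hiIdx p i) ↔ ¬ c (loIdx p i) := fun i => by
    simpa [swapHalves_lo] using hc2 (loIdx p i)
  let S : Finset (Fin p) := Finset.univ.filter fun i => ¬ c (loIdx p i)
  have h1 : ∀ i, c (swapHalves p S (loIdx p i)) := by
    intro i
    by_cases h : c (loIdx p i) <;> simp [swapHalves_lo, S, h, hlh]
  have h2 : ∀ x, ¬ c x → ∃ j, swapHalves p S x = hiIdx p j := by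
    intro x hx
    rcases lo_or_hi p x with ⟨i, rfl⟩ | ⟨i, rfl⟩
    · exact ⟨i, by simp [swapHalves_lo, S, hx]⟩
    · refine ⟨i, ?_⟩
      rw [hlh, not_not] at hx
      simp [swapHalves_hi, S, hx]
  choose f hf using fun i => h2 (τ (swapHalves p S (loIdx p i)))
    (fun h => (hc1 _).1 h (h1 i))
  have finj : Function.Injective f := by
    intro i j hij
    have h := (hf i).trans ((congrArg (hiIdx p) hij).trans (hf j).symm)
    have h' := (swapHalves_invol p S).injective
      (τ.injective ((swapHalves_invol p S).injective h))
    have h3 : (loIdx p i).val = (loIdx p j).val := congrArg Fin.val h'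
    exact Fin.ext h3
  exact ⟨S, Equiv.ofBijective f (Finite.injective_iff_bijective.1 finj), hf⟩
end

section
/- Let n ≥ 1, r ≥ 1, let p₁, …, p_r be non-negative integers with p = p₁ + ⋯ + p_r, and let τ be a partition of {1, …, 2p} into pairs. Then there exist finitely many words w₁, …, w_c ∈ FreeGroup(Fin r) such that for all g₁, …, g_r ∈ O(n), tr((g₁^{⊗p₁} ⊗ ⋯ ⊗ g_r^{⊗p_r}) ∘ J_τ) = ∏_{j=1}^c tr(w_j(g)), where w_j(g) is the image of w_j under the homomorphism FreeGroup(Fin r) → O(n) sending the i-th generator to g_i. In particular, the spin network ψ_{α,J_τ} associated to the representations α_i = V^{⊗p_i} of O(n) is a product of Wilson loops. -/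
open scoped TensorProduct

/-- For `a ∈ {1, …, p₁ + ⋯ + p_r}`, the index `i` of the block `p₁ + ⋯ + p_{i-1} < a ≤
p₁ + ⋯ + p_i` containing `a`. -/
noncomputable def blockIndex {r : ℕ} (p : Fin r → ℕ) (a : Fin (∑ i, p i)) : Fin r :=
  (Finset.univ.filter fun i : Fin r => (a : ℕ) < ∑ k ∈ Finset.Iic i, p k).min'
    (by
      have ha := a.isLt
      cases r with
      | zero => simp at ha
      | succ r' =>
        refine ⟨Fin.last r', Finset.mem_filter.mpr ⟨Finset.mem_univ _, ?_⟩⟩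
        have huniv : Finset.Iic (Fin.last r') = Finset.univ := by
          ext x; simp [Fin.le_last]
        rw [huniv]
        exact ha)

/-- Edges with source, target, and a word as label. -/
abbrev WEdge (V : Type) (r : ℕ) := V × V × FreeGroup (Fin r)

/-- Value of an edge at a colouring `i` of the vertices. -/
noncomputable def wval {V : Type} {n r : ℕ} (g : Fin r → Matrix.orthogonalGroup (Fin n) ℝ)
    (i : V → Fin n) (e : WEdge V r) : ℝ :=
  ((FreeGroup.lift g e.2.2 : Matrix.orthogonalGroup (Fin n) ℝ) :
    Matrix (Fin n) (Fin n) ℝ) (i e.1) (i e.2.1)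

open Classical in
/-- Number of ends of `e` at `v`. -/
noncomputable def wdeg {V : Type} {r : ℕ} (v : V) (e : WEdge V r) : ℕ :=
  (if e.1 = v then 1 else 0) + (if e.2.1 = v then 1 else 0)

/-- Wilson loop. -/
noncomputable def wtr {n r : ℕ} (g : Fin r → Matrix.orthogonalGroup (Fin n) ℝ)
    (w : FreeGroup (Fin r)) : ℝ :=
  Matrix.trace ((FreeGroup.lift g w : Matrix.orthogonalGroup (Fin n) ℝ) :
    Matrix (Fin n) (Fin n) ℝ)

/-- The contraction property for graphs with vertex set `V`. -/
def WProp (n r : ℕ) (V : Type) [Fintype V] : Prop :=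
  ∀ E : Multiset (WEdge V r), (∀ v, (E.map (wdeg v)).sum = 2) →
    ∃ L : List (FreeGroup (Fin r)), ∀ g : Fin r → Matrix.orthogonalGroup (Fin n) ℝ,
      letI := Classical.decEq V
      ∑ i : V → Fin n, (E.map (wval g i)).prod = (L.map (wtr g)).prod

lemma orth_inv_apply {n : ℕ} (A : Matrix.orthogonalGroup (Fin n) ℝ) (x y : Fin n) :
    ((A⁻¹ : Matrix.orthogonalGroup (Fin n) ℝ) : Matrix (Fin n) (Fin n) ℝ) x y =
      (A : Matrix (Fin n) (Fin n) ℝ) y x := by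
  rw [Matrix.UnitaryGroup.inv_val, Matrix.star_apply]
  simp

lemma wnorm {V : Type} {n r : ℕ} (e : WEdge V r) (v : V) (h : wdeg v e ≠ 0) :
    ∃ (b : V) (w : FreeGroup (Fin r)), (∀ u, wdeg u e = wdeg u (v, b, w)) ∧
      ∀ (g : Fin r → Matrix.orthogonalGroup (Fin n) ℝ) (i : V → Fin n),
        wval g i e = wval g i (v, b, w) := by
  obtain ⟨a, b, w⟩ := e
  by_cases ha : a = v
  · subst ha
    exact ⟨b, w, fun _ => rfl, fun _ _ => rfl⟩
  · by_cases hb : b = v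
    · subst hb
      refine ⟨a, w⁻¹, fun u => ?_, fun g i => ?_⟩
      · simp [wdeg, add_comm]
      · simp only [wval, map_inv]
        rw [orth_inv_apply]
    · simp [wdeg, ha, hb] at h

/-- Inclusion of edges. -/
def wsome {V : Type} {r : ℕ} (e : WEdge V r) : WEdge (Option V) r :=
  (some e.1, some e.2.1, e.2.2)

lemma nif {p q : Prop} {_ : Decidable p} {_ : Decidable q} (h : p ↔ q) :
    (if p then 1 else 0 : ℕ) = if q then 1 else 0 := if_congr h rfl rfl

lemma wdeg_merge {V : Type} {r : ℕ} (v b c : V) (w w2 w3 : FreeGroup (Fin r)) :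
    wdeg v (b, c, w3) = wdeg (some v) (none, some b, w) + wdeg (some v) (none, some c, w2) := by
  by_cases hb : b = v <;> by_cases hc : c = v <;> simp [wdeg, hb, hc]

lemma wdeg_wsome {V : Type} {r : ℕ} (v : V) (e : WEdge V r) :
    wdeg (some v) (wsome e) = wdeg v e := by
  rw [wdeg, wdeg]
  exact congrArg₂ (· + ·) (nif Option.some_inj) (nif Option.some_inj)

lemma exists_wsome {V : Type} {r : ℕ} (E : Multiset (WEdge (Option V) r))
    (h : (E.map (wdeg none)).sum = 0) : ∃ F : Multiset (WEdge V r), E = F.map wsome := by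
  induction E using Multiset.induction_on with
  | empty => exact ⟨0, by simp⟩
  | cons e E ih =>
    simp only [Multiset.map_cons, Multiset.sum_cons, Nat.add_eq_zero_iff] at h
    obtain ⟨F, rfl⟩ := ih h.2
    obtain ⟨a, b, w⟩ := e
    cases a with
    | none => simp [wdeg] at h
    | some a =>
      cases b with
      | none => simp [wdeg] at h
      | some b => exact ⟨(a, b, w) ::ₘ F, by simp [wsome]⟩

lemma exists_wdeg_ne {V : Type} {r : ℕ} (E : Multiset (WEdge V r)) (v : V)
    (h : (E.map (wdeg v)).sum ≠ 0) : ∃ e F, E = e ::ₘ F ∧ wdeg v e ≠ 0 := by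
  by_contra hc
  apply h
  apply Multiset.sum_eq_zero
  intro x hx
  obtain ⟨e, he, rfl⟩ := Multiset.mem_map.1 hx
  by_contra hne
  obtain ⟨F, hF⟩ := Multiset.exists_cons_of_mem he
  exact hc ⟨e, F, hF, hne⟩

lemma sum_option {V : Type} [Fintype V] {n : ℕ} [DecidableEq V] {_ : DecidableEq (Option V)}
    (f : (Option V → Fin n) → ℝ) :
    ∑ i, f i = ∑ i : V → Fin n, ∑ x : Fin n, f (fun a => Option.casesOn a x i) := by
  rw [Finset.sum_comm, ← Fintype.sum_prod_type' (fun x i => f (fun a => Option.casesOn a x i))]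
  refine Fintype.sum_equiv (Equiv.piOptionEquivProd (β := fun _ : Option V => Fin n)) _ _ ?_
  intro i
  congr 1
  funext a
  cases a <;> rfl

lemma wprop_option {n r : ℕ} (V : Type) [Fintype V] (hV : WProp n r V) :
    WProp n r (Option V) := by
  intro E hE
  obtain ⟨e, E', rfl, he⟩ := exists_wdeg_ne E none (by rw [hE]; norm_num)
  obtain ⟨b, w, hd, hv⟩ := wnorm (n := n) e none he
  simp only [Multiset.map_cons, Multiset.sum_cons, hd] at hE
  cases b with
  | none =>
    obtain ⟨F, rfl⟩ := exists_wsome E' (by have := hE none; simp [wdeg] at this ⊢; exact this)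
    obtain ⟨L, hL⟩ := hV F (by
      intro v
      have := hE (some v)
      simpa [wdeg_wsome, wdeg.eq_1 (some v) (none, _, _), Function.comp_def] using this)
    refine ⟨w :: L, fun g => ?_⟩
    let _ := Classical.decEq V
    rw [sum_option]
    simp only [Multiset.map_cons, Multiset.prod_cons, hv, Multiset.map_map, Function.comp_def,
      List.map_cons, List.prod_cons, ← hL]
    rw [Finset.mul_sum]
    refine Finset.sum_congr rfl fun i _ => ?_
    simp only [wval, wsome]
    rw [← Finset.sum_mul]
    rfl
  | some b =>
    obtain ⟨e2, E2, rfl, he2⟩ := exists_wdeg_ne E' none (by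
      have := hE none
      intro h0
      rw [h0] at this
      simp [wdeg] at this)
    obtain ⟨c, w2, hd2, hv2⟩ := wnorm (n := n) e2 none he2
    simp only [Multiset.map_cons, Multiset.sum_cons, hd2] at hE
    cases c with
    | none =>
      have := hE none
      simp [wdeg] at this
      omega
    | some c =>
      obtain ⟨F, rfl⟩ := exists_wsome E2 (by
        have := hE none
        rw [wdeg, wdeg] at this
        simp only [if_true, reduceCtorEq, if_false] at this
        omega)
      obtain ⟨L, hL⟩ := hV ((b, c, w⁻¹ * w2) ::ₘ F) (by
        intro v
        have := hE (some v)
        simp only [Multiset.map_map, Function.comp_def, wdeg_wsome] at this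
        simp only [Multiset.map_cons, Multiset.sum_cons]
        rw [← this, wdeg_merge v b c w w2]
        ring)
      refine ⟨L, fun g => ?_⟩
      let _ := Classical.decEq V
      rw [sum_option, ← hL]
      refine Finset.sum_congr rfl fun i _ => ?_
      simp only [Multiset.map_cons, Multiset.prod_cons, hv, hv2, Multiset.map_map,
        Function.comp_def]
      simp only [wval, wsome, ← mul_assoc]
      rw [← Finset.sum_mul]
      congr 1
      rw [map_mul, map_inv, Matrix.UnitaryGroup.mul_val, Matrix.mul_apply]
      refine Finset.sum_congr rfl fun x _ => ?_
      rw [orth_inv_apply]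

lemma wprop_equiv {n r : ℕ} {V W : Type} [Fintype V] [Fintype W] (e : V ≃ W)
    (hV : WProp n r V) : WProp n r W := by
  intro E hE
  obtain ⟨L, hL⟩ := hV (E.map fun x => (e.symm x.1, e.symm x.2.1, x.2.2)) (by
    intro v
    rw [← hE (e v), Multiset.map_map]
    congr 2
    funext x
    change wdeg v _ = _
    rw [wdeg, wdeg]
    exact congrArg₂ (· + ·) (nif e.symm_apply_eq)
      (nif e.symm_apply_eq))
  refine ⟨L, fun g => ?_⟩
  let _ := Classical.decEq V
  let _ := Classical.decEq W
  rw [← hL]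
  refine Fintype.sum_equiv (e.symm.arrowCongr (Equiv.refl _)) _ _ fun i => ?_
  rw [Multiset.map_map]
  congr 2
  funext x
  simp [wval]

lemma wprop_all {n r : ℕ} (V : Type) [Fintype V] : WProp n r V := by
  refine Fintype.induction_empty_option (P := fun V _ => WProp n r V) ?_ ?_ ?_ V
  · intro α β _ e h
    exact @wprop_equiv n r α β (Fintype.ofEquiv β e.symm) _ e h
  · intro E _
    refine ⟨[], fun g => ?_⟩
    have : E = 0 := Multiset.eq_zero_of_forall_notMem fun x => x.1.elim
    subst this
    simp
  · intro α _ h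
    exact wprop_option α h

/-- first half -/
def lft {d : ℕ} (j : Fin d) : Fin (2 * d) := ⟨(j : ℕ), by have := j.isLt; omega⟩
/-- second half -/
def rgt {d : ℕ} (j : Fin d) : Fin (2 * d) := ⟨d + (j : ℕ), by have := j.isLt; omega⟩

lemma sum_halves {d : ℕ} (f : Fin (2 * d) → ℕ) :
    ∑ j : Fin d, (f (lft j) + f (rgt j)) = ∑ k, f k := by
  rw [Finset.sum_add_distrib]
  have h : d + d = 2 * d := by ring
  rw [← Equiv.sum_comp (finCongr h) f, Fin.sum_univ_add]
  rfl

lemma trace_pairing (n d : ℕ) (τ : Equiv.Perm (Fin (2 * d)))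
    (A : Fin d → Matrix (Fin n) (Fin n) ℂ) :
    LinearMap.trace ℂ _ ((PiTensorProduct.map fun a => Matrix.mulVecLin (A a)) ∘ₗ
      pairingMap n d τ) =
    ∑ i : Fin (2 * d) → Fin n,
      (∏ k ∈ Finset.univ.filter fun k : Fin (2 * d) => k < τ k,
        (if i k = i (τ k) then (1 : ℂ) else 0)) *
      ∏ j, A j (i (lft j)) (i (rgt j)) := by
  have : Module.Free ℂ (⨂[ℂ] _ : Fin d, (Fin n → ℂ)) := Module.Free.of_divisionRing _ _
  have key : ∀ (T : (⨂[ℂ] _ : Fin d, (Fin n → ℂ)) →ₗ[ℂ] ⨂[ℂ] _ : Fin d, (Fin n → ℂ))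
      (f : (⨂[ℂ] _ : Fin d, (Fin n → ℂ)) →ₗ[ℂ] ℂ) (x : ⨂[ℂ] _ : Fin d, (Fin n → ℂ)),
      LinearMap.trace ℂ _ (T ∘ₗ f.smulRight x) = f (T x) := by
    intro T f x
    rw [← LinearMap.trace_smulRight]
    congr 1
    ext y
    simp
  have hsum : ∀ (T : (⨂[ℂ] _ : Fin d, (Fin n → ℂ)) →ₗ[ℂ] ⨂[ℂ] _ : Fin d, (Fin n → ℂ))
      (S : (Fin (2 * d) → Fin n) →
        ((⨂[ℂ] _ : Fin d, (Fin n → ℂ)) →ₗ[ℂ] ⨂[ℂ] _ : Fin d, (Fin n → ℂ))),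
      T ∘ₗ (∑ i, S i) = ∑ i, T ∘ₗ S i := fun T S => Finset.mul_sum _ S T
  rw [pairingMap, hsum, map_sum]
  refine Finset.sum_congr rfl fun i _ => ?_
  rw [LinearMap.comp_smul, map_smul, key, smul_eq_mul]
  congr 1
  rw [PiTensorProduct.map_tprod, PiTensorProduct.lift.tprod]
  simp [lft, rgt]

lemma sum_pairing (n m : ℕ) (τ : Equiv.Perm (Fin m)) (hinv : ∀ x, τ (τ x) = x)
    (hfpf : ∀ x, τ x ≠ x) (π : Fin m → {k : Fin m // k < τ k})
    (hπ : ∀ k, (π k : Fin m) = if k < τ k then k else τ k)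
    [DecidableEq {k : Fin m // k < τ k}] (F : (Fin m → Fin n) → ℂ) :
    ∑ i : Fin m → Fin n,
      (∏ k ∈ Finset.univ.filter fun k : Fin m => k < τ k,
        (if i k = i (τ k) then (1 : ℂ) else 0)) * F i =
    ∑ i : {k : Fin m // k < τ k} → Fin n, F (i ∘ π) := by
  simp_rw [Finset.prod_ite_zero, Finset.prod_const_one, ite_mul, one_mul, zero_mul]
  rw [← Finset.sum_filter]
  symm
  have hpi : ∀ k : {k : Fin m // k < τ k}, π k = k := by
    intro k; apply Subtype.ext; rw [hπ, if_pos k.2]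
  have hpi2 : ∀ k, π (τ k) = π k := by
    intro k
    apply Subtype.ext
    rw [hπ, hπ, hinv]
    have := hfpf k
    split_ifs <;> first | rfl | (exfalso; omega)
  refine Finset.sum_bij' (fun i _ => i ∘ π) (fun i _ k => i k) ?_ ?_ ?_ ?_ ?_
  · intro i _
    simp [hpi2]
  · intro i _
    simp
  · intro i _
    funext k
    simp [hpi]
  · intro i hi
    simp only [Finset.mem_filter, Finset.mem_univ, true_and] at hi
    funext k
    simp only [Function.comp]
    rw [hπ]
    split_ifs with h
    · rfl
    · rw [hi (τ k) (by rw [hinv]; have := hfpf k; omega), hinv]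
  · intro i _
    rfl

/-- **Orthogonal spin networks with the invariants `J_τ` are products of Wilson loops.**
For any partition `τ` of `{1, …, 2p}` into pairs (`p = p₁ + ⋯ + p_r`) there are words
`w₁, …, w_c` in the free group on `r` generators such that for all `g₁, …, g_r ∈ O(n)`,
`tr((g₁^{⊗p₁} ⊗ ⋯ ⊗ g_r^{⊗p_r}) ∘ J_τ) = ∏ j, tr(w_j(g))`. -/
theorem orthogonal_spin_network_eq_product_of_wilson_loops
    (n r : ℕ) (hn : 1 ≤ n) (hr : 1 ≤ r) (p : Fin r → ℕ)
    (τ : Equiv.Perm (Fin (2 * ∑ i, p i))) (hinv : τ * τ = 1) (hfpf : ∀ x, τ x ≠ x) :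
    ∃ L : List (FreeGroup (Fin r)),
      ∀ g : Fin r → Matrix.orthogonalGroup (Fin n) ℝ,
        LinearMap.trace ℂ _
            ((PiTensorProduct.map fun a : Fin (∑ i, p i) =>
              Matrix.mulVecLin
                ((g (blockIndex p a) : Matrix (Fin n) (Fin n) ℝ).map
                  (Complex.ofReal : ℝ → ℂ))) ∘ₗ pairingMap n (∑ i, p i) τ)
          = (L.map fun w =>
              ((Matrix.trace
                ((FreeGroup.lift g w : Matrix.orthogonalGroup (Fin n) ℝ) :
                  Matrix (Fin n) (Fin n) ℝ) : ℝ) : ℂ)).prod := by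
  have hinv' : ∀ x, τ (τ x) = x := fun x => by
    rw [← Equiv.Perm.mul_apply, hinv]; rfl
  generalize hβ : blockIndex p = β
  clear hβ
  generalize (∑ i, p i) = d at τ hinv hfpf hinv' β
  let π : Fin (2 * d) → {k : Fin (2 * d) // k < τ k} := fun k =>
    ⟨if k < τ k then k else τ k, by
      split_ifs with h
      · exact h
      · rw [hinv']; have := hfpf k; omega⟩
  have hπ : ∀ k, (π k : Fin (2 * d)) = if k < τ k then k else τ k := fun k => rfl
  classical
  obtain ⟨L, hL⟩ := wprop_all (n := n) (r := r) {k : Fin (2 * d) // k < τ k}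
    (Finset.univ.val.map fun j : Fin d => (π (lft j), π (rgt j), FreeGroup.of (β j))) (by
      intro v
      rw [Multiset.map_map]
      change ∑ j : Fin d, wdeg v (π (lft j), π (rgt j), FreeGroup.of (β j)) = 2
      simp only [wdeg]
      have := sum_halves (fun k => if π k = v then 1 else 0)
      refine Eq.trans ?_ (this.trans ?_)
      · refine Finset.sum_congr rfl fun j _ => ?_
        congr
      · rw [← Finset.sum_filter]
        have : (Finset.univ.filter fun k => π k = v) = {(v : Fin (2 * d)), τ v} := by
          ext k
          simp only [Finset.mem_filter, Finset.mem_univ, true_and, Finset.mem_insert,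
            Finset.mem_singleton, Subtype.ext_iff, hπ]
          have hv := v.2
          constructor
          · intro h
            split_ifs at h with h1
            · exact Or.inl h
            · right; rw [← h, hinv']
          · rintro (h | h)
            · rw [h, if_pos hv]
            · rw [h, hinv', if_neg (by omega)]
        rw [this, Finset.sum_const, Finset.card_pair (hfpf _).symm]
        rfl)
  refine ⟨L, fun g => ?_⟩
  rw [trace_pairing, sum_pairing n _ τ hinv' hfpf π hπ
    (fun i => ∏ j, ((g (β j) : Matrix (Fin n) (Fin n) ℝ).map (Complex.ofReal : ℝ → ℂ))
      (i (lft j)) (i (rgt j)))]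
  have h := congrArg (Complex.ofReal) (hL g)
  rw [Complex.ofReal_sum] at h
  have h2 : ((((L.map (wtr g)).prod : ℝ)) : ℂ) = (L.map fun w => ((wtr g w : ℝ) : ℂ)).prod := by
    rw [← Complex.ofRealHom_eq_coe, map_list_prod, List.map_map]
    rfl
  rw [h2] at h
  refine Eq.trans ?_ h
  refine Finset.sum_congr (by congr!) fun i _ => ?_
  rw [Multiset.map_map]
  change _ = ((∏ j : Fin d, wval g i (π (lft j), π (rgt j), FreeGroup.of (β j)) : ℝ) : ℂ)
  rw [Complex.ofReal_prod]
  refine Finset.prod_congr rfl fun j _ => ?_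
  simp [wval]
end
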